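/- Let α ≥ 0 be a real number such that limsup_{x → ∞} |M(x)/x| ≤ α. Then limsup_{x → ∞} |m₁(x)| ≤ (271/360 − γ) α, where γ is the Euler–Mascheroni constant. -/

import Mathlib

open Filter

/-- `M(x) = ∑_{n ≤ x} μ(n)`. -/
noncomputable def Mobius_M (x : ℝ) : ℝ :=
  ∑ n ∈ Finset.Icc 1 ⌊x⌋₊, (ArithmeticFunction.moebius n : ℝ)

/-- `m₁(x) = ∑_{n ≤ x} μ(n) (1/n - 1/x)`. -/
noncomputable def Mobius_m1 (x : ℝ) : ℝ :=
  ∑ n ∈ Finset.Icc 1 ⌊x⌋₊, (ArithmeticFunction.moebius n : ℝ) * (1 / n - 1 / x)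

/-!
Pairing functions of `t` with `M(x/t)` on `[1, x]`, the constant `1` gives `x m₁(x)`, while
`∑_{n ≤ t} φ(t/n)/n` gives just `∫_1^x φ`, because `∑_{n ≤ y} M(y/n) = 1`. Hence for every weight
`φ` the kernel `K(t) = 1 - ∑_{n ≤ t} φ(t/n)/n` satisfies
`∫_1^x M(x/t) K(t) dt = x m₁(x) - ∫_1^x φ`. If `K` is nonnegative and integrable and
`|M(y)| ≤ β y + C`, the left side is at most `β x ∫_1^∞ K(t) dt/t` up to `O(1)`. For
`φ(u) = 4/u² - 4/u⁴` the kernel is a perfect square and `∫_1^∞ K(t) dt/t = 3/4 - γ`,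
slightly better than `271/360 - γ`.
-/

open MeasureTheory Set

section FloorSums

lemma natCast_mem_Icc_of_mem_Icc_floor {y : ℝ} {n : ℕ} (hn : n ∈ Finset.Icc 1 ⌊y⌋₊) :
    (n : ℝ) ∈ Icc 1 y := by
  rw [Finset.mem_Icc] at hn
  exact ⟨mod_cast hn.1, (Nat.le_floor_iff' (by lia)).1 hn.2⟩

lemma natCast_ne_zero_of_mem_Icc_one {N n : ℕ} (hn : n ∈ Finset.Icc 1 N) : (n : ℝ) ≠ 0 :=
  mod_cast Nat.one_le_iff_ne_zero.1 (Finset.mem_Icc.1 hn).1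

lemma div_natCast_mem_Icc_of_mem_Icc_floor {y : ℝ} {n : ℕ} (hn : n ∈ Finset.Icc 1 ⌊y⌋₊) :
    y / n ∈ Icc 1 y := by
  obtain ⟨h1n, hny⟩ := natCast_mem_Icc_of_mem_Icc_floor hn
  exact ⟨(one_le_div (by positivity)).2 hny, div_le_self (zero_le_one.trans (h1n.trans hny)) h1n⟩

lemma sum_Icc_floor_eq_sum_ite {M : Type*} [AddCommMonoid M] (f : ℕ → M) {t y : ℝ} (h : t ≤ y) :
    ∑ n ∈ Finset.Icc 1 ⌊t⌋₊, f n =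
      ∑ n ∈ Finset.Icc 1 ⌊y⌋₊, if (n : ℝ) ≤ t then f n else 0 := by
  rw [← Finset.sum_filter]
  congr 1
  ext n
  simp only [Finset.mem_filter, Finset.mem_Icc]
  constructor
  · rintro ⟨hn, hnt⟩
    exact ⟨⟨hn, hnt.trans (Nat.floor_le_floor h)⟩, (Nat.le_floor_iff' (by lia)).1 hnt⟩
  · rintro ⟨⟨hn, -⟩, hnt⟩
    exact ⟨hn, Nat.le_floor hnt⟩

variable {E : Type*} [NormedAddCommGroup E] {f : ℝ → E} {F : ℕ → ℝ → E} {a b c y : ℝ}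

lemma intervalIntegrable_indicator_Ici (hac : a ≤ c) (hcb : c ≤ b)
    (hf : IntervalIntegrable f volume c b) :
    IntervalIntegrable ((Ici c).indicator f) volume a b := by
  rw [intervalIntegrable_iff_integrableOn_Icc_of_le (hac.trans hcb), IntegrableOn,
    integrable_indicator_iff measurableSet_Ici, IntegrableOn,
    Measure.restrict_restrict measurableSet_Ici]
  rw [intervalIntegrable_iff_integrableOn_Icc_of_le hcb] at hf
  exact hf.mono_set fun t ht ↦ ⟨ht.1, ht.2.2⟩

lemma intervalIntegrable_indicator_Iic (hac : a ≤ c) (hcb : c ≤ b)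
    (hf : IntervalIntegrable f volume a c) :
    IntervalIntegrable ((Iic c).indicator f) volume a b := by
  rw [intervalIntegrable_iff_integrableOn_Icc_of_le (hac.trans hcb), IntegrableOn,
    integrable_indicator_iff measurableSet_Iic, IntegrableOn,
    Measure.restrict_restrict measurableSet_Iic]
  rw [intervalIntegrable_iff_integrableOn_Icc_of_le hac] at hf
  exact hf.mono_set fun t ht ↦ ⟨ht.2.1, ht.1⟩

lemma intervalIntegrable_sum_Icc_floor (hy : 1 ≤ y)
    (hF : ∀ n ∈ Finset.Icc 1 ⌊y⌋₊, IntervalIntegrable (F n) volume n y) :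
    IntervalIntegrable (fun t ↦ ∑ n ∈ Finset.Icc 1 ⌊t⌋₊, F n t) volume 1 y := by
  have h : IntervalIntegrable
      (fun t ↦ ∑ n ∈ Finset.Icc 1 ⌊y⌋₊, (Ici (n : ℝ)).indicator (F n) t) volume 1 y := by
    rw [← Finset.sum_fn]
    refine IntervalIntegrable.sum _ fun n hn ↦ ?_
    obtain ⟨h1n, hny⟩ := natCast_mem_Icc_of_mem_Icc_floor hn
    exact intervalIntegrable_indicator_Ici h1n hny (hF n hn)
  refine h.congr fun t ht ↦ ?_
  rw [uIoc_of_le hy] at ht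
  simp only [sum_Icc_floor_eq_sum_ite _ ht.2, indicator_apply, mem_Ici]

lemma intervalIntegrable_div_natCast_of_mem_Icc_floor {n : ℕ} (hn : n ∈ Finset.Icc 1 ⌊y⌋₊)
    (hf : IntervalIntegrable f volume 1 y) : IntervalIntegrable f volume 1 (y / n) := by
  have hmem := div_natCast_mem_Icc_of_mem_Icc_floor hn
  refine hf.mono_set (uIcc_subset_uIcc_left ?_)
  rwa [uIcc_of_le (hmem.1.trans hmem.2)]

variable [NormedSpace ℝ E]

lemma integral_indicator_Ici (hac : a ≤ c) (hcb : c ≤ b) :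
    ∫ t in a..b, (Ici c).indicator f t = ∫ t in c..b, f t := by
  simp only [intervalIntegral.integral_of_le, hac.trans hcb, hcb, ← integral_Icc_eq_integral_Ioc]
  rw [setIntegral_indicator measurableSet_Ici, ← Ici_inter_Iic, inter_right_comm, Ici_inter_Ici,
    sup_eq_right.2 hac, Ici_inter_Iic]

lemma integral_sum_Icc_floor (hy : 1 ≤ y)
    (hF : ∀ n ∈ Finset.Icc 1 ⌊y⌋₊, IntervalIntegrable (F n) volume n y) :
    ∫ t in 1..y, ∑ n ∈ Finset.Icc 1 ⌊t⌋₊, F n t =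
      ∑ n ∈ Finset.Icc 1 ⌊y⌋₊, ∫ t in n..y, F n t := by
  calc ∫ t in 1..y, ∑ n ∈ Finset.Icc 1 ⌊t⌋₊, F n t
      = ∫ t in 1..y, ∑ n ∈ Finset.Icc 1 ⌊y⌋₊, (Ici (n : ℝ)).indicator (F n) t := by
        refine intervalIntegral.integral_congr fun t ht ↦ ?_
        rw [uIcc_of_le hy] at ht
        simp only [sum_Icc_floor_eq_sum_ite _ ht.2, indicator_apply, mem_Ici]
    _ = ∑ n ∈ Finset.Icc 1 ⌊y⌋₊, ∫ t in 1..y, (Ici (n : ℝ)).indicator (F n) t := by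
        refine intervalIntegral.integral_finsetSum fun n hn ↦ ?_
        obtain ⟨h1n, hny⟩ := natCast_mem_Icc_of_mem_Icc_floor hn
        exact intervalIntegrable_indicator_Ici h1n hny (hF n hn)
    _ = ∑ n ∈ Finset.Icc 1 ⌊y⌋₊, ∫ t in n..y, F n t := by
        refine Finset.sum_congr rfl fun n hn ↦ ?_
        obtain ⟨h1n, hny⟩ := natCast_mem_Icc_of_mem_Icc_floor hn
        exact integral_indicator_Ici h1n hny

lemma integral_sum_Icc_floor_div (hy : 1 ≤ y)
    (hF : ∀ n ∈ Finset.Icc 1 ⌊y⌋₊, IntervalIntegrable (F n) volume 1 (y / n)) :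
    ∫ t in 1..y, ∑ n ∈ Finset.Icc 1 ⌊y / t⌋₊, F n t =
      ∑ n ∈ Finset.Icc 1 ⌊y⌋₊, ∫ t in 1..y / n, F n t := by
  calc ∫ t in 1..y, ∑ n ∈ Finset.Icc 1 ⌊y / t⌋₊, F n t
      = ∫ t in 1..y, ∑ n ∈ Finset.Icc 1 ⌊y⌋₊, (Iic (y / n)).indicator (F n) t := by
        refine intervalIntegral.integral_congr fun t ht ↦ ?_
        rw [uIcc_of_le hy] at ht
        have ht0 : 0 < t := one_pos.trans_le ht.1
        simp only [sum_Icc_floor_eq_sum_ite _ (div_le_self (zero_le_one.trans hy) ht.1),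
          indicator_apply, mem_Iic]
        refine Finset.sum_congr rfl fun n hn ↦ ?_
        have hn0 : (0 : ℝ) < n := one_pos.trans_le (natCast_mem_Icc_of_mem_Icc_floor hn).1
        simp only [le_div_comm₀ hn0 ht0]
    _ = ∑ n ∈ Finset.Icc 1 ⌊y⌋₊, ∫ t in 1..y, (Iic (y / n)).indicator (F n) t :=
        intervalIntegral.integral_finsetSum fun n hn ↦
          have hmem := div_natCast_mem_Icc_of_mem_Icc_floor hn
          intervalIntegrable_indicator_Iic hmem.1 hmem.2 (hF n hn)
    _ = ∑ n ∈ Finset.Icc 1 ⌊y⌋₊, ∫ t in 1..y / n, F n t :=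
        Finset.sum_congr rfl fun n hn ↦
          intervalIntegral.integral_indicator (div_natCast_mem_Icc_of_mem_Icc_floor hn)

lemma intervalIntegrable_inv_smul_comp_div (hc : c ≠ 0)
    (hf : IntervalIntegrable f volume 1 (y / c)) :
    IntervalIntegrable (fun t ↦ c⁻¹ • f (t / c)) volume c y := by
  have h := (hf.comp_mul_right (c := c⁻¹)).smul c⁻¹
  simpa only [div_inv_eq_mul, one_mul, div_mul_cancel₀ y hc, ← div_eq_mul_inv] using! h

lemma intervalIntegrable_sum_Icc_floor_dilate (hy : 1 ≤ y)
    (hF : ∀ n ∈ Finset.Icc 1 ⌊y⌋₊, IntervalIntegrable (F n) volume 1 (y / n)) :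
    IntervalIntegrable (fun t ↦ ∑ n ∈ Finset.Icc 1 ⌊t⌋₊, (n : ℝ)⁻¹ • F n (t / n)) volume 1 y :=
  intervalIntegrable_sum_Icc_floor hy fun n hn ↦
    intervalIntegrable_inv_smul_comp_div (natCast_ne_zero_of_mem_Icc_one hn) (hF n hn)

lemma integral_sum_Icc_floor_dilate (hy : 1 ≤ y)
    (hF : ∀ n ∈ Finset.Icc 1 ⌊y⌋₊, IntervalIntegrable (F n) volume 1 (y / n)) :
    ∫ t in 1..y, ∑ n ∈ Finset.Icc 1 ⌊t⌋₊, (n : ℝ)⁻¹ • F n (t / n) =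
      ∑ n ∈ Finset.Icc 1 ⌊y⌋₊, ∫ t in 1..y / n, F n t := by
  rw [integral_sum_Icc_floor hy fun n hn ↦
    intervalIntegrable_inv_smul_comp_div (natCast_ne_zero_of_mem_Icc_one hn) (hF n hn)]
  refine Finset.sum_congr rfl fun n hn ↦ ?_
  have hn0 : (n : ℝ) ≠ 0 := natCast_ne_zero_of_mem_Icc_one hn
  rw [intervalIntegral.integral_smul, intervalIntegral.inv_smul_integral_comp_div, div_self hn0]

end FloorSums

lemma sum_Mobius_M_div {y : ℝ} (hy : 1 ≤ y) :
    ∑ n ∈ Finset.Icc 1 ⌊y⌋₊, Mobius_M (y / n) = 1 := by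
  have h := ArithmeticFunction.sum_Ioc_mul_eq_sum_sum (R := ℝ)
    ArithmeticFunction.zeta ArithmeticFunction.moebius ⌊y⌋₊
  have hone : 1 ≤ ⌊y⌋₊ := Nat.one_le_floor_iff _ |>.2 hy
  simp only [ArithmeticFunction.coe_zeta_mul_coe_moebius, ArithmeticFunction.one_apply,
    Finset.sum_ite_eq', Finset.mem_Ioc, zero_lt_one, hone, and_self, if_true] at h
  rw [h]
  refine Finset.sum_congr rfl fun n hn ↦ ?_
  have hn0 : n ≠ 0 := (Finset.mem_Ioc.1 hn).1.ne'
  simp only [Mobius_M, Nat.floor_div_natCast, ArithmeticFunction.natCoe_apply,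
    ArithmeticFunction.intCoe_apply, ArithmeticFunction.zeta_apply_ne hn0, Nat.cast_one, one_mul]
  rfl

lemma abs_Mobius_M_le {x : ℝ} (hx : 0 ≤ x) : |Mobius_M x| ≤ x := by
  calc |Mobius_M x| ≤ ∑ n ∈ Finset.Icc 1 ⌊x⌋₊, |(ArithmeticFunction.moebius n : ℝ)| :=
        Finset.abs_sum_le_sum_abs _ _
    _ ≤ ∑ _n ∈ Finset.Icc 1 ⌊x⌋₊, (1 : ℝ) := Finset.sum_le_sum fun _ _ ↦
        mod_cast ArithmeticFunction.abs_moebius_le_one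
    _ = ⌊x⌋₊ := by simp
    _ ≤ x := Nat.floor_le hx

lemma measurable_Mobius_M : Measurable Mobius_M :=
  (measurable_from_nat (f := fun N : ℕ ↦
    ∑ n ∈ Finset.Icc 1 N, (ArithmeticFunction.moebius n : ℝ))).comp Nat.measurable_floor

lemma intervalIntegrable_Mobius_M_div_mul {φ : ℝ → ℝ} {a b x : ℝ} (hx : 0 ≤ x) (ha : 0 < a)
    (hab : a ≤ b) (hφ : IntervalIntegrable φ volume a b) :
    IntervalIntegrable (fun t ↦ Mobius_M (x / t) * φ t) volume a b := by
  rw [intervalIntegrable_iff_integrableOn_Ioc_of_le hab] at hφ ⊢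
  refine hφ.bdd_mul (c := x / a)
    (measurable_Mobius_M.comp (measurable_const.div measurable_id)).aestronglyMeasurable ?_
  filter_upwards [ae_restrict_mem measurableSet_Ioc] with t ht
  have ht0 : 0 < t := ha.trans ht.1
  calc |Mobius_M (x / t)| ≤ x / t := abs_Mobius_M_le (by positivity)
    _ ≤ x / a := by gcongr; exact ht.1.le

lemma integral_Mobius_M_div {x : ℝ} (hx : 1 ≤ x) :
    ∫ t in 1..x, Mobius_M (x / t) = x * Mobius_m1 x := by
  simp only [Mobius_M, Mobius_m1]
  rw [integral_sum_Icc_floor_div hx fun _ _ ↦ intervalIntegrable_const, Finset.mul_sum]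
  refine Finset.sum_congr rfl fun n _ ↦ ?_
  rw [intervalIntegral.integral_const, smul_eq_mul]
  field_simp

section DilationKernel

/-- The kernel `1 - ∑_{n ≤ t} φ(t/n)/n` attached to a weight `φ`. Integrating it against
`t ↦ M(x/t)` gives `x m₁(x)` up to the error `∫_1^x φ`, whatever the weight. -/
noncomputable def dilationKernel (φ : ℝ → ℝ) (t : ℝ) : ℝ :=
  1 - ∑ n ∈ Finset.Icc 1 ⌊t⌋₊, (n : ℝ)⁻¹ * φ (t / n)

variable {φ : ℝ → ℝ} {x : ℝ}

lemma integral_Mobius_M_div_mul_sum (hx : 1 ≤ x) (hφ : IntervalIntegrable φ volume 1 x) :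
    ∫ t in 1..x, Mobius_M (x / t) * ∑ n ∈ Finset.Icc 1 ⌊t⌋₊, (n : ℝ)⁻¹ * φ (t / n) =
      ∫ u in 1..x, φ u := by
  let F : ℕ → ℝ → ℝ := fun n u ↦ Mobius_M (x / n / u) * φ u
  have hF : ∀ n ∈ Finset.Icc 1 ⌊x⌋₊, IntervalIntegrable (F n) volume 1 (x / n) := fun n hn ↦ by
    have hmem := div_natCast_mem_Icc_of_mem_Icc_floor hn
    exact intervalIntegrable_Mobius_M_div_mul (zero_le_one.trans hmem.1) one_pos hmem.1
      (intervalIntegrable_div_natCast_of_mem_Icc_floor hn hφ)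
  calc ∫ t in 1..x, Mobius_M (x / t) * ∑ n ∈ Finset.Icc 1 ⌊t⌋₊, (n : ℝ)⁻¹ * φ (t / n)
      = ∫ t in 1..x, ∑ n ∈ Finset.Icc 1 ⌊t⌋₊, (n : ℝ)⁻¹ • F n (t / n) := by
        refine intervalIntegral.integral_congr fun t _ ↦ ?_
        simp only [F, Finset.mul_sum, smul_eq_mul]
        refine Finset.sum_congr rfl fun n hn ↦ ?_
        have hn0 : (n : ℝ) ≠ 0 := natCast_ne_zero_of_mem_Icc_one hn
        rw [div_div, mul_div_cancel₀ t hn0]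
        ring
    _ = ∫ u in 1..x, ∑ n ∈ Finset.Icc 1 ⌊x / u⌋₊, F n u := by
        rw [integral_sum_Icc_floor_dilate hx hF, integral_sum_Icc_floor_div hx hF]
    _ = ∫ u in 1..x, φ u := by
        refine intervalIntegral.integral_congr fun u hu ↦ ?_
        rw [uIcc_of_le hx] at hu
        have h1 : 1 ≤ x / u := (one_le_div (one_pos.trans_le hu.1)).2 hu.2
        simp only [F, div_right_comm x, ← Finset.sum_mul, sum_Mobius_M_div h1, one_mul]

lemma intervalIntegrable_dilationKernel (hx : 1 ≤ x) (hφ : IntervalIntegrable φ volume 1 x) :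
    IntervalIntegrable (dilationKernel φ) volume 1 x :=
  intervalIntegrable_const.sub <| intervalIntegrable_sum_Icc_floor_dilate hx
    fun _ hn ↦ intervalIntegrable_div_natCast_of_mem_Icc_floor hn hφ

theorem integral_Mobius_M_div_mul_dilationKernel (hx : 1 ≤ x)
    (hφ : IntervalIntegrable φ volume 1 x) :
    ∫ t in 1..x, Mobius_M (x / t) * dilationKernel φ t = x * Mobius_m1 x - ∫ u in 1..x, φ u := by
  have hx0 : 0 ≤ x := by positivity
  have h1 : IntervalIntegrable (fun t ↦ Mobius_M (x / t)) volume 1 x := by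
    simpa only [mul_one] using
      intervalIntegrable_Mobius_M_div_mul hx0 one_pos hx (intervalIntegrable_const (c := (1 : ℝ)))
  have h2 := intervalIntegrable_Mobius_M_div_mul hx0 one_pos hx <|
    intervalIntegrable_sum_Icc_floor_dilate (F := fun _ ↦ φ) hx
      fun _ hn ↦ intervalIntegrable_div_natCast_of_mem_Icc_floor hn hφ
  simp only [smul_eq_mul] at h2
  simp only [dilationKernel, mul_sub, mul_one]
  rw [intervalIntegral.integral_sub h1 h2, integral_Mobius_M_div hx,
    integral_Mobius_M_div_mul_sum hx hφ]

lemma intervalIntegrable_div_id (hx : 1 ≤ x) (hφ : IntervalIntegrable φ volume 1 x) :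
    IntervalIntegrable (fun t ↦ φ t / t) volume 1 x := by
  refine hφ.mul_continuousOn (continuousOn_inv₀.mono fun t ht ↦ ?_)
  rw [uIcc_of_le hx] at ht
  exact (one_pos.trans_le ht.1).ne'

lemma integral_dilationKernel_div (hx : 1 ≤ x) (hφ : IntervalIntegrable φ volume 1 x) :
    ∫ t in 1..x, dilationKernel φ t / t =
      Real.log x - ∑ n ∈ Finset.Icc 1 ⌊x⌋₊, (n : ℝ)⁻¹ * ∫ u in 1..x / n, φ u / u := by
  have hx0 : 0 < x := by positivity
  let F : ℕ → ℝ → ℝ := fun n u ↦ (n : ℝ)⁻¹ * (φ u / u)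
  have hF : ∀ n ∈ Finset.Icc 1 ⌊x⌋₊, IntervalIntegrable (F n) volume 1 (x / n) := fun n hn ↦
    (intervalIntegrable_div_natCast_of_mem_Icc_floor hn
      (intervalIntegrable_div_id hx hφ)).const_mul _
  have hinv : IntervalIntegrable (fun t : ℝ ↦ t⁻¹) volume 1 x :=
    intervalIntegrable_inv_iff.2 (.inr (notMem_uIcc_of_lt one_pos hx0))
  calc ∫ t in 1..x, dilationKernel φ t / t
      = ∫ t in 1..x, (t⁻¹ - ∑ n ∈ Finset.Icc 1 ⌊t⌋₊, (n : ℝ)⁻¹ • F n (t / n)) := by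
        refine intervalIntegral.integral_congr fun t _ ↦ ?_
        simp only [F, dilationKernel, sub_div, one_div, Finset.sum_div, smul_eq_mul]
        congr 1
        refine Finset.sum_congr rfl fun n hn ↦ ?_
        have hn0 : (n : ℝ) ≠ 0 := natCast_ne_zero_of_mem_Icc_one hn
        field_simp
    _ = Real.log x - ∑ n ∈ Finset.Icc 1 ⌊x⌋₊, (n : ℝ)⁻¹ * ∫ u in 1..x / n, φ u / u := by
        rw [intervalIntegral.integral_sub hinv (intervalIntegrable_sum_Icc_floor_dilate hx hF),
          integral_sum_Icc_floor_dilate hx hF, integral_inv_of_pos one_pos hx0, div_one]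
        simp only [F, intervalIntegral.integral_const_mul]

end DilationKernel

/-- The weight `4/u² - 4/u⁴`. Since `∑ n³ = (∑ n)²`, its dilation kernel is the perfect square
`(1 - ⌊t⌋(⌊t⌋ + 1)/t²)²`, hence nonnegative, and it is at most `1/t²`. -/
noncomputable def squareWeight (u : ℝ) : ℝ := 4 * (u ^ (-2 : ℤ) - u ^ (-4 : ℤ))

lemma intervalIntegrable_squareWeight {a b : ℝ} (ha : 0 < a) (hb : 0 < b) :
    IntervalIntegrable squareWeight volume a b :=
  have h (k : ℤ) : IntervalIntegrable (fun u : ℝ ↦ u ^ k) volume a b :=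
    intervalIntegral.intervalIntegrable_zpow (.inr (notMem_uIcc_of_lt ha hb))
  ((h (-2)).sub (h (-4))).const_mul 4

lemma sum_Icc_natCast (N : ℕ) : ∑ n ∈ Finset.Icc 1 N, (n : ℝ) = N * (N + 1) / 2 := by
  induction N with
  | zero => simp
  | succ k ih =>
    rw [Finset.sum_Icc_succ_top (by lia), ih]
    push_cast
    ring

lemma sum_Icc_natCast_pow_three (N : ℕ) :
    ∑ n ∈ Finset.Icc 1 N, (n : ℝ) ^ 3 = (N * (N + 1) / 2) ^ 2 := by
  induction N with
  | zero => simp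
  | succ k ih =>
    rw [Finset.sum_Icc_succ_top (by lia), ih]
    push_cast
    ring

lemma dilationKernel_squareWeight (t : ℝ) :
    dilationKernel squareWeight t = (1 - ⌊t⌋₊ * (⌊t⌋₊ + 1) / t ^ 2) ^ 2 := by
  have h : ∀ n ∈ Finset.Icc 1 ⌊t⌋₊, (n : ℝ)⁻¹ * squareWeight (t / n) =
      4 * ((n : ℝ) / t ^ 2 - (n : ℝ) ^ 3 / t ^ 4) := fun n hn ↦ by
    have hn0 : (n : ℝ) ≠ 0 := natCast_ne_zero_of_mem_Icc_one hn
    simp only [squareWeight]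
    field_simp
  rw [dilationKernel, Finset.sum_congr rfl h, ← Finset.mul_sum, Finset.sum_sub_distrib,
    ← Finset.sum_div, ← Finset.sum_div, sum_Icc_natCast, sum_Icc_natCast_pow_three]
  ring

lemma dilationKernel_squareWeight_nonneg (t : ℝ) : 0 ≤ dilationKernel squareWeight t := by
  rw [dilationKernel_squareWeight]
  exact sq_nonneg _

lemma dilationKernel_squareWeight_le {t : ℝ} (ht : 0 < t) :
    dilationKernel squareWeight t ≤ t ^ (-2 : ℤ) := by
  have hle := Nat.floor_le ht.le
  have hlt := Nat.lt_floor_add_one t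
  have habs : |t ^ 2 - ⌊t⌋₊ * (⌊t⌋₊ + 1)| ≤ t := by
    rw [abs_le]
    constructor <;> nlinarith
  calc dilationKernel squareWeight t = (t ^ 2 - ⌊t⌋₊ * (⌊t⌋₊ + 1)) ^ 2 / t ^ 4 := by
        rw [dilationKernel_squareWeight]
        field_simp
    _ ≤ t ^ 2 / t ^ 4 :=
        div_le_div_of_nonneg_right
          (sq_le_sq' (abs_le.1 habs).1 (abs_le.1 habs).2) (by positivity)
    _ = t ^ (-2 : ℤ) := by field_simp

lemma integral_zpow_neg_two_le_one {x : ℝ} (hx : 0 < x) : ∫ t in 1..x, t ^ (-2 : ℤ) ≤ 1 := by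
  calc ∫ t in 1..x, t ^ (-2 : ℤ) = 1 - x⁻¹ := by
        rw [integral_zpow (.inr ⟨by norm_num, notMem_uIcc_of_lt one_pos hx⟩)]
        norm_num [div_neg]
    _ ≤ 1 := sub_le_self 1 (inv_nonneg.2 hx.le)

lemma abs_integral_squareWeight_le {x : ℝ} (hx : 1 ≤ x) :
    |∫ u in 1..x, squareWeight u| ≤ 4 := by
  have hle : ∀ u ∈ Ioc 1 x, |squareWeight u| ≤ 4 * u ^ (-2 : ℤ) := fun u hu ↦ by
    have hmono : u ^ (-4 : ℤ) ≤ u ^ (-2 : ℤ) := zpow_le_zpow_right₀ hu.1.le (by norm_num)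
    have hpos : 0 ≤ u ^ (-4 : ℤ) := zpow_nonneg (zero_le_one.trans hu.1.le) _
    rw [squareWeight, abs_of_nonneg (by linarith)]
    linarith
  have hx0 : 0 < x := one_pos.trans_le hx
  have hint : IntervalIntegrable (fun u : ℝ ↦ 4 * u ^ (-2 : ℤ)) volume 1 x :=
    (intervalIntegral.intervalIntegrable_zpow (.inr (notMem_uIcc_of_lt one_pos hx0))).const_mul 4
  rw [← Real.norm_eq_abs]
  calc ‖∫ u in 1..x, squareWeight u‖ ≤ ∫ u in 1..x, 4 * u ^ (-2 : ℤ) :=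
        intervalIntegral.norm_integral_le_of_norm_le hx (.of_forall hle) hint
    _ ≤ 4 := by
        rw [intervalIntegral.integral_const_mul]
        linarith [integral_zpow_neg_two_le_one hx0]

lemma integral_squareWeight_div {y : ℝ} (hy : 0 < y) :
    ∫ u in 1..y, squareWeight u / u = (1 - y ^ (-2 : ℤ)) ^ 2 := by
  have h0 : (0 : ℝ) ∉ uIcc 1 y := notMem_uIcc_of_lt one_pos hy
  have hint (k : ℤ) : IntervalIntegrable (fun u : ℝ ↦ u ^ k) volume 1 y :=
    intervalIntegral.intervalIntegrable_zpow (.inr h0)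
  calc ∫ u in 1..y, squareWeight u / u = ∫ u in 1..y, 4 * (u ^ (-3 : ℤ) - u ^ (-5 : ℤ)) := by
        refine intervalIntegral.integral_congr fun u hu ↦ ?_
        have hu0 : u ≠ 0 := ne_of_mem_of_not_mem hu h0
        simp only [squareWeight]
        field_simp
    _ = (1 - y ^ (-2 : ℤ)) ^ 2 := by
        rw [intervalIntegral.integral_const_mul, intervalIntegral.integral_sub (hint _) (hint _),
          integral_zpow (.inr ⟨by norm_num, h0⟩), integral_zpow (.inr ⟨by norm_num, h0⟩)]
        norm_num
        field_simp
        ring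

lemma integral_dilationKernel_squareWeight_div_natCast {N : ℕ} (hN : 1 ≤ N) :
    ∫ t in 1..N, dilationKernel squareWeight t / t =
      (N + 1) / N - ((N + 1) / N) ^ 2 / 4 - (harmonic N - Real.log N) := by
  have hN1 : (1 : ℝ) ≤ N := mod_cast hN
  have hN0 : (0 : ℝ) < N := by positivity
  have hterm : ∀ n ∈ Finset.Icc 1 N, (n : ℝ)⁻¹ * ∫ u in 1..N / n, squareWeight u / u =
      (n : ℝ)⁻¹ - 2 * n / N ^ 2 + (n : ℝ) ^ 3 / N ^ 4 := fun n hn ↦ by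
    have hn0 : (0 : ℝ) < n := mod_cast (Finset.mem_Icc.1 hn).1
    rw [integral_squareWeight_div (by positivity)]
    field_simp
    ring
  rw [integral_dilationKernel_div hN1 (intervalIntegrable_squareWeight one_pos hN0),
    Nat.floor_natCast, Finset.sum_congr rfl hterm, Finset.sum_add_distrib, Finset.sum_sub_distrib,
    ← Finset.sum_div, ← Finset.sum_div, ← Finset.mul_sum, sum_Icc_natCast,
    sum_Icc_natCast_pow_three, harmonic_eq_sum_Icc]
  push_cast
  field_simp
  ring

lemma tendsto_integral_dilationKernel_squareWeight_div :
    Tendsto (fun N : ℕ ↦ ∫ t in 1..N, dilationKernel squareWeight t / t) atTop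
      (nhds (3 / 4 - Real.eulerMascheroniConstant)) := by
  have hratio : Tendsto (fun N : ℕ ↦ ((N : ℝ) + 1) / N) atTop (nhds 1) := by
    simpa [add_comm] using tendsto_add_mul_div_add_mul_atTop_nhds (1 : ℝ) 0 1 one_ne_zero
  have hlim := (hratio.sub ((hratio.pow 2).div_const 4)).sub Real.tendsto_harmonic_sub_log
  have hval : 1 - 1 ^ 2 / 4 - Real.eulerMascheroniConstant =
      3 / 4 - Real.eulerMascheroniConstant := by norm_num
  rw [hval] at hlim
  refine hlim.congr' ?_
  filter_upwards [eventually_ge_atTop 1] with N hN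
  rw [integral_dilationKernel_squareWeight_div_natCast hN]

lemma intervalIntegrable_dilationKernel_squareWeight_div {x : ℝ} (hx : 1 ≤ x) :
    IntervalIntegrable (fun t ↦ dilationKernel squareWeight t / t) volume 1 x :=
  intervalIntegrable_div_id hx <| intervalIntegrable_dilationKernel hx <|
    intervalIntegrable_squareWeight one_pos (one_pos.trans_le hx)

lemma integral_dilationKernel_squareWeight_div_le {x : ℝ} (hx : 1 ≤ x) :
    ∫ t in 1..x, dilationKernel squareWeight t / t ≤ 3 / 4 - Real.eulerMascheroniConstant := by
  refine ge_of_tendsto tendsto_integral_dilationKernel_squareWeight_div ?_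
  filter_upwards [tendsto_natCast_atTop_atTop.eventually_ge_atTop x] with N hxN
  refine intervalIntegral.integral_mono_interval le_rfl hx hxN ?_
    (intervalIntegrable_dilationKernel_squareWeight_div (hx.trans hxN))
  filter_upwards [ae_restrict_mem measurableSet_Ioc] with t ht
  exact div_nonneg (dilationKernel_squareWeight_nonneg t) (zero_le_one.trans ht.1.le)

lemma abs_integral_Mobius_M_div_mul_dilationKernel_le {β C x : ℝ} (hβ : 0 ≤ β) (hC : 0 ≤ C)
    (hM : ∀ y, 1 ≤ y → |Mobius_M y| ≤ β * y + C) (hx : 1 ≤ x) :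
    |∫ t in 1..x, Mobius_M (x / t) * dilationKernel squareWeight t| ≤
      β * x * (3 / 4 - Real.eulerMascheroniConstant) + C := by
  have hx0 : 0 < x := by positivity
  have hle : ∀ t ∈ Ioc 1 x, |Mobius_M (x / t) * dilationKernel squareWeight t| ≤
      β * x * (dilationKernel squareWeight t / t) + C * t ^ (-2 : ℤ) := fun t ht ↦ by
    have ht0 : 0 < t := one_pos.trans ht.1
    have hK := dilationKernel_squareWeight_nonneg t
    calc |Mobius_M (x / t) * dilationKernel squareWeight t|
        = |Mobius_M (x / t)| * dilationKernel squareWeight t := by rw [abs_mul, abs_of_nonneg hK]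
      _ ≤ (β * (x / t) + C) * dilationKernel squareWeight t := by
          gcongr
          exact hM _ ((one_le_div ht0).2 ht.2)
      _ = β * x * (dilationKernel squareWeight t / t) + C * dilationKernel squareWeight t := by
          ring
      _ ≤ β * x * (dilationKernel squareWeight t / t) + C * t ^ (-2 : ℤ) := by
          gcongr
          exact dilationKernel_squareWeight_le ht0
  have hint₁ := (intervalIntegrable_dilationKernel_squareWeight_div hx).const_mul (β * x)
  have hint₂ : IntervalIntegrable (fun t : ℝ ↦ C * t ^ (-2 : ℤ)) volume 1 x :=
    (intervalIntegral.intervalIntegrable_zpow (.inr (notMem_uIcc_of_lt one_pos hx0))).const_mul C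
  rw [← Real.norm_eq_abs]
  calc ‖∫ t in 1..x, Mobius_M (x / t) * dilationKernel squareWeight t‖
      ≤ ∫ t in 1..x, (β * x * (dilationKernel squareWeight t / t) + C * t ^ (-2 : ℤ)) :=
        intervalIntegral.norm_integral_le_of_norm_le hx (.of_forall hle) (hint₁.add hint₂)
    _ = β * x * (∫ t in 1..x, dilationKernel squareWeight t / t) +
          C * ∫ t in 1..x, t ^ (-2 : ℤ) := by
        rw [intervalIntegral.integral_add hint₁ hint₂, intervalIntegral.integral_const_mul,
          intervalIntegral.integral_const_mul]
    _ ≤ β * x * (3 / 4 - Real.eulerMascheroniConstant) + C * 1 := by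
        gcongr
        · exact integral_dilationKernel_squareWeight_div_le hx
        · exact integral_zpow_neg_two_le_one hx0
    _ = β * x * (3 / 4 - Real.eulerMascheroniConstant) + C := by rw [mul_one]

lemma abs_Mobius_m1_le {β C x : ℝ} (hβ : 0 ≤ β) (hC : 0 ≤ C)
    (hM : ∀ y, 1 ≤ y → |Mobius_M y| ≤ β * y + C) (hx : 1 ≤ x) :
    |Mobius_m1 x| ≤ (3 / 4 - Real.eulerMascheroniConstant) * β + (C + 4) / x := by
  have hx0 : 0 < x := by positivity
  have hid := integral_Mobius_M_div_mul_dilationKernel hx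
    (intervalIntegrable_squareWeight one_pos hx0)
  have hmul : x * |Mobius_m1 x| ≤ β * x * (3 / 4 - Real.eulerMascheroniConstant) + C + 4 :=
    calc x * |Mobius_m1 x| = |x * Mobius_m1 x| := by rw [abs_mul, abs_of_pos hx0]
      _ = |(∫ t in 1..x, Mobius_M (x / t) * dilationKernel squareWeight t) +
            ∫ u in 1..x, squareWeight u| := by rw [hid, sub_add_cancel]
      _ ≤ _ := (abs_add_le _ _).trans <| add_le_add
        (abs_integral_Mobius_M_div_mul_dilationKernel_le hβ hC hM hx)
        (abs_integral_squareWeight_le hx)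
  rw [mul_comm, ← le_div_iff₀ hx0] at hmul
  refine hmul.trans_eq ?_
  field_simp
  ring

lemma isBoundedUnder_abs_Mobius_M_div :
    IsBoundedUnder (· ≤ ·) atTop fun x : ℝ ↦ |Mobius_M x / x| := by
  refine isBoundedUnder_of_eventually_le (a := 1) ?_
  filter_upwards [eventually_gt_atTop 0] with x hx
  rw [abs_div, abs_of_pos hx, div_le_one hx]
  exact abs_Mobius_M_le hx.le

lemma limsup_abs_Mobius_M_div_nonneg : 0 ≤ limsup (fun x : ℝ ↦ |Mobius_M x / x|) atTop :=
  le_limsup_of_frequently_le (Frequently.of_forall fun _ ↦ abs_nonneg _)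
    isBoundedUnder_abs_Mobius_M_div

lemma exists_abs_Mobius_M_le_of_limsup_lt {β : ℝ}
    (h : limsup (fun x : ℝ ↦ |Mobius_M x / x|) atTop < β) :
    ∃ C, 0 ≤ C ∧ ∀ y, 1 ≤ y → |Mobius_M y| ≤ β * y + C := by
  have hβ : 0 ≤ β := limsup_abs_Mobius_M_div_nonneg.trans h.le
  obtain ⟨y₀, hy₀⟩ :=
    eventually_atTop.1 (eventually_lt_of_limsup_lt h isBoundedUnder_abs_Mobius_M_div)
  refine ⟨max y₀ 0, le_max_right _ _, fun y hy ↦ ?_⟩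
  have hy0 : 0 < y := by positivity
  rcases le_total y₀ y with hle | hle
  · have hlt := (hy₀ y hle).le
    rw [abs_div, abs_of_pos hy0, div_le_iff₀ hy0] at hlt
    exact le_add_of_le_of_nonneg hlt (le_max_right _ _)
  · calc |Mobius_M y| ≤ y := abs_Mobius_M_le hy0.le
      _ ≤ max y₀ 0 := hle.trans (le_max_left _ _)
      _ ≤ β * y + max y₀ 0 := le_add_of_nonneg_left (by positivity)

lemma limsup_abs_Mobius_m1_le_of_lt {β : ℝ}
    (h : limsup (fun x : ℝ ↦ |Mobius_M x / x|) atTop < β) :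
    limsup (fun x : ℝ ↦ |Mobius_m1 x|) atTop ≤
      (3 / 4 - Real.eulerMascheroniConstant) * β := by
  have hβ : 0 ≤ β := limsup_abs_Mobius_M_div_nonneg.trans h.le
  obtain ⟨C, hC, hM⟩ := exists_abs_Mobius_M_le_of_limsup_lt h
  have hlim : Tendsto
      (fun x : ℝ ↦ (3 / 4 - Real.eulerMascheroniConstant) * β + (C + 4) / x) atTop
      (nhds ((3 / 4 - Real.eulerMascheroniConstant) * β)) := by
    simpa only [add_zero, id] using
      (tendsto_const_nhds (x := (3 / 4 - Real.eulerMascheroniConstant) * β)).add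
        (tendsto_const_nhds.div_atTop tendsto_id)
  rw [← hlim.limsup_eq]
  refine limsup_le_limsup ?_ ?_ hlim.isBoundedUnder_le
  · filter_upwards [eventually_ge_atTop 1] with x hx
    exact abs_Mobius_m1_le hβ hC hM hx
  · exact IsCoboundedUnder.of_frequently_ge (Frequently.of_forall fun x ↦ abs_nonneg _)

theorem limsup_m1_le_general :
    limsup (fun x : ℝ ↦ |Mobius_m1 x|) atTop ≤
      (3 / 4 - Real.eulerMascheroniConstant) * limsup (fun x : ℝ ↦ |Mobius_M x / x|) atTop := by
  have hc : 0 < 3 / 4 - Real.eulerMascheroniConstant := by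
    linarith [Real.eulerMascheroniConstant_lt_two_thirds]
  rw [← div_le_iff₀' hc]
  refine le_of_forall_gt_imp_ge_of_dense fun β hβ ↦ ?_
  rw [div_le_iff₀' hc]
  exact limsup_abs_Mobius_m1_le_of_lt hβ

/-- If `limsup_{x→∞} |M(x)/x| ≤ α` then
`limsup_{x→∞} |m₁(x)| ≤ (271/360 - γ) α`. -/
theorem limsup_m1_le (α : ℝ) (hα : 0 ≤ α)
    (h : limsup (fun x : ℝ => |Mobius_M x / x|) atTop ≤ α) :
    limsup (fun x : ℝ => |Mobius_m1 x|) atTop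
      ≤ (271 / 360 - Real.eulerMascheroniConstant) * α := by
  have hγ := Real.eulerMascheroniConstant_lt_two_thirds
  calc limsup (fun x : ℝ ↦ |Mobius_m1 x|) atTop
      ≤ (3 / 4 - Real.eulerMascheroniConstant) * limsup (fun x : ℝ ↦ |Mobius_M x / x|) atTop :=
        limsup_m1_le_general
    _ ≤ (271 / 360 - Real.eulerMascheroniConstant) * α :=
        mul_le_mul (by linarith) h limsup_abs_Mobius_M_div_nonneg (by linarith)
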